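/- arXiv:2003.00940 — 2 statements merged into one kernel-verified Lean document; each statement's English description precedes it below -/
import Mathlib

section
/- (Theorem 1.) Assume Δ = 0 and γ ≠ 4. If τ(λ,μ) ∈ G for some λ, μ ∈ K, then also τ(αλ, αμ) ∈ G, τ(βλ, βμ) ∈ G, τ(γλ, γμ) ∈ G and τ(αl·λ, αl·μ) ∈ G. (Hence the translation subgroup N := {g ∈ G : g = τ(λ,μ) for some λ,μ ∈ K} is a module over the subring of K generated by α, β, γ, αl, βm.) -/
noncomputable section

variable {K : Type*} [Field K] [CharZero K]

/-- The linear functional `x ↦ c 0 * x 0 + c 1 * x 1 + c 2 * x 2` on `K³`. -/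
def lf (c : Fin 3 → K) : (Fin 3 → K) →ₗ[K] K :=
  c 0 • LinearMap.proj 0 + c 1 • LinearMap.proj 1 + c 2 • LinearMap.proj 2

/-- `s₁ : x ↦ x − (2x₁ − α x₂ − β x₃)·a₁` where `a₁ = Pi.single 0 1`. -/
def s1 (α β : K) : Module.End K (Fin 3 → K) :=
  LinearMap.id - (lf ![2, -α, -β]).smulRight (Pi.single 0 1)

/-- `s₂ : x ↦ x − (−x₁ + 2x₂ − l·x₃)·a₂`. -/
def s2 (l : K) : Module.End K (Fin 3 → K) :=
  LinearMap.id - (lf ![-1, 2, -l]).smulRight (Pi.single 1 1)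

/-- `s₃ : x ↦ x − (−x₁ − m·x₂ + 2x₃)·a₃`. -/
def s3 (m : K) : Module.End K (Fin 3 → K) :=
  LinearMap.id - (lf ![-1, -m, 2]).smulRight (Pi.single 2 1)

/-- `b = b₁ = (4−γ)a₁ + (l+2)a₂ + (m+2)a₃`, with `γ = l·m`. -/
def bvec (l m : K) : Fin 3 → K := ![4 - l * m, l + 2, m + 2]

/-- `b₂ = (2α+βm)a₁ + (4−β)a₂ + (α+2m)a₃`. -/
def b2vec (α β l m : K) : Fin 3 → K := ![2*α + β*m, 4 - β, α + 2*m]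

/-- `b₃ = (2β+αl)a₁ + (β+2l)a₂ + (4−α)a₃`. -/
def b3vec (α β l m : K) : Fin 3 → K := ![2*β + α*l, β + 2*l, 4 - α]

/-- `τ(λ,μ) : a₁ ↦ a₁ + ω·b, a₂ ↦ a₂ + λ·b, a₃ ↦ a₃ + μ·b`,
where `ω = −(λ(l+2) + μ(m+2))/(4−γ)`. -/
def tau (l m lam mu : K) : Module.End K (Fin 3 → K) :=
  LinearMap.id +
    (lf ![-(lam*(l+2) + mu*(m+2))/(4 - l*m), lam, mu]).smulRight (bvec l m)

/-- `τ` applied to a vector `(λ,μ) ∈ K²`. -/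
def tauv (l m : K) (v : K × K) : Module.End K (Fin 3 → K) := tau l m v.1 v.2

def c1 (α β : K) : K × K := (α, β)
def c2 (l : K) : K × K := (-2, l)
def c3 (m : K) : K × K := (m, -2)

/-- `z₁ : a₁ ↦ −a₁ + (2/(4−γ))·b, a₂ ↦ −a₂, a₃ ↦ −a₃`. -/
def z1 (l m : K) : Module.End K (Fin 3 → K) :=
  -LinearMap.id + (lf ![2/(4 - l*m), 0, 0]).smulRight (bvec l m)

/-- `z₂ : a₂ ↦ −a₂ + (2/(l+2))·b, a₁ ↦ −a₁, a₃ ↦ −a₃`. -/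
def z2 (l m : K) : Module.End K (Fin 3 → K) :=
  -LinearMap.id + (lf ![0, 2/(l+2), 0]).smulRight (bvec l m)

/-- `z₃ : a₃ ↦ −a₃ + (2/(m+2))·b, a₁ ↦ −a₁, a₂ ↦ −a₂`. -/
def z3 (l m : K) : Module.End K (Fin 3 → K) :=
  -LinearMap.id + (lf ![0, 0, 2/(m+2)]).smulRight (bvec l m)

/-- The linear functional `(λ,μ) ↦ c.1·λ + c.2·μ` on `K²`. -/
def lf2 (c : K × K) : (K × K) →ₗ[K] K := c.1 • LinearMap.fst K K K + c.2 • LinearMap.snd K K K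

/-- `σ₁(λ,μ) = (λ,μ) − ((λ(l+2)+μ(m+2))/(4−γ))·(α,β)`. -/
def sigma1 (α β l m : K) : Module.End K (K × K) :=
  LinearMap.id - (lf2 ((l+2)/(4 - l*m), (m+2)/(4 - l*m))).smulRight (α, β)

/-- `σ₂(λ,μ) = (λ,μ) + λ·(−2,l)`. -/
def sigma2 (l : K) : Module.End K (K × K) :=
  LinearMap.id + (LinearMap.fst K K K).smulRight ((-2 : K), l)

/-- `σ₃(λ,μ) = (λ,μ) + μ·(m,−2)`. -/
def sigma3 (m : K) : Module.End K (K × K) :=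
  LinearMap.id + (LinearMap.snd K K K).smulRight (m, (-2 : K))

/-- The sequence `u_x` : `u_x(0)=0, u_x(1)=u_x(2)=1, u_x(3)=x−1,
u_x(n+4) = (x−2)·u_x(n+2) − u_x(n)`. -/
def useq (x : K) : ℕ → K
  | 0 => 0
  | 1 => 1
  | 2 => 1
  | 3 => x - 1
  | (n+4) => (x - 2) * useq x (n+2) - useq x n


theorem lf_apply (c x : Fin 3 → K) : lf c x = c 0 * x 0 + c 1 * x 1 + c 2 * x 2 := by
  simp [lf]

theorem s1_mul_self (α β : K) : s1 α β * s1 α β = 1 := by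
  refine LinearMap.ext fun x => funext fun i => ?_
  fin_cases i <;> simp [s1, lf_apply]
  ring

theorem s2_mul_self (l : K) : s2 l * s2 l = 1 := by
  refine LinearMap.ext fun x => funext fun i => ?_
  fin_cases i <;> simp [s2, lf_apply]
  ring

theorem s3_mul_self (m : K) : s3 m * s3 m = 1 := by
  refine LinearMap.ext fun x => funext fun i => ?_
  fin_cases i <;> simp [s3, lf_apply]
  ring

/-- In a submonoid generated by involutions every element has a right inverse. -/
theorem Submonoid.exists_mul_eq_one_of_mem_closure {M : Type*} [Monoid M] {S : Set M}
    (hS : ∀ s ∈ S, s * s = 1) {x : M} (hx : x ∈ Submonoid.closure S) :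
    ∃ y ∈ Submonoid.closure S, x * y = 1 := by
  induction hx using Submonoid.closure_induction with
  | mem s hs => exact ⟨s, Submonoid.subset_closure hs, hS s hs⟩
  | one => exact ⟨1, one_mem _, one_mul 1⟩
  | mul a b _ _ iha ihb =>
    obtain ⟨a', ha', haa'⟩ := iha
    obtain ⟨b', hb', hbb'⟩ := ihb
    refine ⟨b' * a', mul_mem hb' ha', ?_⟩
    rw [mul_assoc, ← mul_assoc b, hbb', one_mul, haa']

/-- The functional `f` such that `τ(v) = id + f ⊗ b`. -/
def tauFun (l m : K) (v : K × K) : (Fin 3 → K) →ₗ[K] K :=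
  lf ![-(v.1*(l+2) + v.2*(m+2))/(4 - l*m), v.1, v.2]

theorem tauFun_apply (l m : K) (v : K × K) (x : Fin 3 → K) :
    tauFun l m v x =
      -(v.1*(l+2) + v.2*(m+2))/(4 - l*m) * x 0 + v.1 * x 1 + v.2 * x 2 :=
  lf_apply _ x

theorem tauv_apply (l m : K) (v : K × K) (x : Fin 3 → K) :
    tauv l m v x = x + tauFun l m v x • bvec l m :=
  rfl

theorem tauFun_bvec {l m : K} (hγ : l * m ≠ 4) (v : K × K) :
    tauFun l m v (bvec l m) = 0 := by
  have hr := inv_mul_cancel₀ (sub_ne_zero.mpr hγ.symm)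
  simp [tauFun_apply, bvec, div_eq_mul_inv]
  linear_combination -(v.1 * (l + 2) + v.2 * (m + 2)) * hr

theorem tauv_zero (l m : K) : tauv l m 0 = 1 := by
  refine LinearMap.ext fun x => ?_
  simp [tauv_apply, tauFun_apply]

theorem tauv_mul_tauv {l m : K} (hγ : l * m ≠ 4) (v w : K × K) :
    tauv l m v * tauv l m w = tauv l m (v + w) := by
  refine LinearMap.ext fun x => ?_
  have hadd : tauFun l m (v + w) x = tauFun l m w x + tauFun l m v x := by
    simp only [tauFun_apply, Prod.fst_add, Prod.snd_add]
    ring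
  rw [Module.End.mul_apply, tauv_apply, tauv_apply, tauv_apply, map_add, map_smul,
    tauFun_bvec hγ, hadd, smul_zero, add_zero, add_smul, add_assoc]

/-- Conjugating `τ(v)` by an involution fixing `b`. -/
theorem mul_tauv_mul {l m : K} {v w : K × K} {s : Module.End K (Fin 3 → K)} (hs : s * s = 1)
    (hb : s (bvec l m) = bvec l m) (hf : ∀ x, tauFun l m v (s x) = tauFun l m w x) :
    s * tauv l m v * s = tauv l m w := by
  refine LinearMap.ext fun x => ?_
  have hsx : s (s x) = x := LinearMap.congr_fun hs x
  simp only [Module.End.mul_apply, tauv_apply, map_add, map_smul, hb, hf, hsx]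

theorem s1_mul_tauv_mul_s1 {α β l m : K}
    (hΔ : 8 - 2*α - 2*β - 2*(l*m) - (α*l + β*m) = 0) (hγ : l * m ≠ 4) (v : K × K) :
    s1 α β * tauv l m v * s1 α β = tauv l m (sigma1 α β l m v) := by
  have hr := inv_mul_cancel₀ (sub_ne_zero.mpr hγ.symm)
  refine mul_tauv_mul (s1_mul_self α β) (funext fun i => ?_) fun x => ?_
  · fin_cases i <;> simp [s1, lf_apply, bvec]
    linear_combination hΔ
  · simp [tauFun_apply, s1, lf_apply, sigma1, lf2, div_eq_mul_inv]
    linear_combination (v.1 * (l + 2) + v.2 * (m + 2)) * (4 - l * m)⁻¹ * x 0 *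
      ((4 - l * m)⁻¹ * hΔ - 2 * hr)

theorem s2_mul_tauv_mul_s2 {l m : K} (hγ : l * m ≠ 4) (v : K × K) :
    s2 l * tauv l m v * s2 l = tauv l m (sigma2 l v) := by
  have hr := inv_mul_cancel₀ (sub_ne_zero.mpr hγ.symm)
  refine mul_tauv_mul (s2_mul_self l) (funext fun i => ?_) fun x => ?_
  · fin_cases i <;> simp [s2, lf_apply, bvec]
    ring
  · simp [tauFun_apply, s2, lf_apply, sigma2, div_eq_mul_inv]
    linear_combination -v.1 * x 0 * hr

theorem s3_mul_tauv_mul_s3 {l m : K} (hγ : l * m ≠ 4) (v : K × K) :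
    s3 m * tauv l m v * s3 m = tauv l m (sigma3 m v) := by
  have hr := inv_mul_cancel₀ (sub_ne_zero.mpr hγ.symm)
  refine mul_tauv_mul (s3_mul_self m) (funext fun i => ?_) fun x => ?_
  · fin_cases i <;> simp [s3, lf_apply, bvec]
    ring
  · simp [tauFun_apply, s3, lf_apply, sigma3, div_eq_mul_inv]
    linear_combination -v.2 * x 0 * hr

/-- The vectors `v` for which the translation `τ(v)` lies in the group generated by
`s₁, s₂, s₃`. -/
def translationSubgroup (α β : K) {l m : K} (hγ : l * m ≠ 4) : AddSubgroup (K × K) where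
  carrier := {v | tauv l m v ∈ Submonoid.closure {s1 α β, s2 l, s3 m}}
  zero_mem' := by
    rw [Set.mem_ofPred_eq, tauv_zero]
    exact one_mem _
  add_mem' {v w} hv hw := by
    rw [Set.mem_ofPred_eq, ← tauv_mul_tauv hγ]
    exact mul_mem hv hw
  neg_mem' {v} hv := by
    have hS : ∀ s ∈ ({s1 α β, s2 l, s3 m} : Set (Module.End K (Fin 3 → K))), s * s = 1 := by
      rintro s (rfl | rfl | rfl)
      exacts [s1_mul_self α β, s2_mul_self l, s3_mul_self m]
    obtain ⟨y, hy, hvy⟩ := Submonoid.exists_mul_eq_one_of_mem_closure hS hv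
    have hinv : tauv l m (-v) * tauv l m v = 1 := by
      rw [tauv_mul_tauv hγ, neg_add_cancel, tauv_zero]
    rwa [Set.mem_ofPred_eq, left_inv_eq_right_inv hinv hvy]

theorem sigma2_sigma3_add (l m : K) (v : K × K) :
    sigma2 l (sigma3 m v) + sigma3 m (sigma2 l v) + (2 : ℤ) • v = (l * m) • v := by
  ext <;> simp [sigma2, sigma3] <;> ring

theorem inv_mul_eq_two_of_discr_eq_zero {α β l m : K}
    (hΔ : 8 - 2*α - 2*β - 2*(l*m) - (α*l + β*m) = 0) (hγ : l * m ≠ 4) :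
    (4 - l * m)⁻¹ * (2 * α + 2 * β + α * l + β * m) = 2 := by
  have hr := inv_mul_cancel₀ (sub_ne_zero.mpr hγ.symm)
  linear_combination 2 * hr - (4 - l * m)⁻¹ * hΔ

theorem sigma1_sigma2_add {α β l m : K}
    (hΔ : 8 - 2*α - 2*β - 2*(l*m) - (α*l + β*m) = 0) (hγ : l * m ≠ 4) (v : K × K) :
    sigma1 α β l m (sigma2 l v) + sigma2 l (sigma1 α β l m v) + (2 : ℤ) • v = α • v := by
  have hr := inv_mul_cancel₀ (sub_ne_zero.mpr hγ.symm)
  have hT := inv_mul_eq_two_of_discr_eq_zero hΔ hγ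
  ext <;> simp [sigma1, sigma2, lf2, div_eq_mul_inv]
  · linear_combination v.1 * α * hr
  · linear_combination α * v.2 * hr - (2 * v.2 + l * v.1) * hT

theorem sigma1_sigma3_add {α β l m : K}
    (hΔ : 8 - 2*α - 2*β - 2*(l*m) - (α*l + β*m) = 0) (hγ : l * m ≠ 4) (v : K × K) :
    sigma1 α β l m (sigma3 m v) + sigma3 m (sigma1 α β l m v) + (2 : ℤ) • v = β • v := by
  have hr := inv_mul_cancel₀ (sub_ne_zero.mpr hγ.symm)
  have hT := inv_mul_eq_two_of_discr_eq_zero hΔ hγ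
  ext <;> simp [sigma1, sigma3, lf2, div_eq_mul_inv]
  · linear_combination β * v.1 * hr - (2 * v.1 + m * v.2) * hT
  · linear_combination v.2 * β * hr

theorem sigma3_sigma2_sigma1_sub {α β l m : K}
    (hΔ : 8 - 2*α - 2*β - 2*(l*m) - (α*l + β*m) = 0) (hγ : l * m ≠ 4) (v : K × K) :
    sigma3 m (sigma2 l (sigma1 α β l m v)) - sigma1 α β l m (sigma2 l (sigma3 m v))
      - (l * m) • v - α • v - β • v + (4 : ℤ) • v = (α * l) • v := by
  have hr := inv_mul_cancel₀ (sub_ne_zero.mpr hγ.symm)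
  have hT := inv_mul_eq_two_of_discr_eq_zero hΔ hγ
  ext <;> simp [sigma1, sigma2, sigma3, lf2, div_eq_mul_inv]
  · linear_combination (l * α + α + β) * v.1 * hr - (2 * v.1 + m * v.2) * hT
  · linear_combination (l * α + α + β) * v.2 * hr + (l * m * v.2 + l * v.1 - 2 * v.2) * hT

/-- Theorem 1: if `Δ = 0`, `γ ≠ 4` and `τ(λ,μ)` lies in the group `G`
generated by `s₁, s₂, s₃`, then so do `τ(αλ,αμ)`, `τ(βλ,βμ)`, `τ(γλ,γμ)` and
`τ(αl·λ, αl·μ)`.  (Since the `sᵢ` are involutions, the subgroup of `GL(M)` they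
generate has the same elements as the submonoid of `End M` they generate.) -/
theorem stmt6 (α β l m : K)
    (hΔ : 8 - 2*α - 2*β - 2*(l*m) - (α*l + β*m) = 0) (hγ : l*m ≠ 4)
    (lam mu : K)
    (h : tau l m lam mu ∈ Submonoid.closure {s1 α β, s2 l, s3 m}) :
    tau l m (α*lam) (α*mu) ∈ Submonoid.closure {s1 α β, s2 l, s3 m} ∧
    tau l m (β*lam) (β*mu) ∈ Submonoid.closure {s1 α β, s2 l, s3 m} ∧
    tau l m ((l*m)*lam) ((l*m)*mu) ∈ Submonoid.closure {s1 α β, s2 l, s3 m} ∧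
    tau l m ((α*l)*lam) ((α*l)*mu) ∈ Submonoid.closure {s1 α β, s2 l, s3 m} := by
  let T := translationSubgroup α β hγ
  have h1 : s1 α β ∈ Submonoid.closure {s1 α β, s2 l, s3 m} :=
    Submonoid.subset_closure (by simp)
  have h2 : s2 l ∈ Submonoid.closure {s1 α β, s2 l, s3 m} :=
    Submonoid.subset_closure (by simp)
  have h3 : s3 m ∈ Submonoid.closure {s1 α β, s2 l, s3 m} :=
    Submonoid.subset_closure (by simp)
  have hσ1 : ∀ v ∈ T, sigma1 α β l m v ∈ T := fun v hv => by
    change tauv l m _ ∈ Submonoid.closure _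
    rw [← s1_mul_tauv_mul_s1 hΔ hγ]
    exact mul_mem (mul_mem h1 hv) h1
  have hσ2 : ∀ v ∈ T, sigma2 l v ∈ T := fun v hv => by
    change tauv l m _ ∈ Submonoid.closure _
    rw [← s2_mul_tauv_mul_s2 hγ]
    exact mul_mem (mul_mem h2 hv) h2
  have hσ3 : ∀ v ∈ T, sigma3 m v ∈ T := fun v hv => by
    change tauv l m _ ∈ Submonoid.closure _
    rw [← s3_mul_tauv_mul_s3 hγ]
    exact mul_mem (mul_mem h3 hv) h3
  have hv : (lam, mu) ∈ T := h
  have hα : α • (lam, mu) ∈ T := by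
    rw [← sigma1_sigma2_add hΔ hγ]
    exact add_mem (add_mem (hσ1 _ (hσ2 _ hv)) (hσ2 _ (hσ1 _ hv))) (zsmul_mem hv 2)
  have hβ : β • (lam, mu) ∈ T := by
    rw [← sigma1_sigma3_add hΔ hγ]
    exact add_mem (add_mem (hσ1 _ (hσ3 _ hv)) (hσ3 _ (hσ1 _ hv))) (zsmul_mem hv 2)
  have hlm : (l * m) • (lam, mu) ∈ T := by
    rw [← sigma2_sigma3_add]
    exact add_mem (add_mem (hσ2 _ (hσ3 _ hv)) (hσ3 _ (hσ2 _ hv))) (zsmul_mem hv 2)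
  have hαl : (α * l) • (lam, mu) ∈ T := by
    rw [← sigma3_sigma2_sigma1_sub hΔ hγ]
    exact add_mem (sub_mem (sub_mem (sub_mem (sub_mem (hσ3 _ (hσ2 _ (hσ1 _ hv)))
      (hσ1 _ (hσ2 _ (hσ3 _ hv)))) hlm) hα) hβ) (zsmul_mem hv 4)
  exact ⟨hα, hβ, hlm, hαl⟩

end
end

section
/- (Theorem 2.) Assume Δ = 0, γ ≠ 4, and (α, β) ≠ (0, 0). Let n ≥ 1 be an integer such that (s₂ ∘ s₃)ⁿ = z₁. Let λ₁, λ₂, λ₃ ∈ K and set s₁' := s₁ ∘ τ(λ₁·c₁), s₂' := s₂ ∘ τ(λ₂·c₂), s₃' := s₃ ∘ τ(λ₃·c₃). Then (s₁' ∘ (s₂' ∘ s₃')ⁿ)² = id_M if and only if (4−γ)·λ₁ + (l+2)·λ₂ + (m+2)·λ₃ = −1. -/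
noncomputable section

variable {K : Type*} [Field K] [CharZero K]

/-- The square of the product of the reflection `x ↦ x − φ(x)·a` with the map `x ↦ −x + h(x)·b`,
for `b` in the hyperplane of the reflection. -/
theorem reflection_mul_neg_add_sq {V : Type*} [AddCommGroup V] [Module K V] (φ h : V →ₗ[K] K)
    (a b : V) (hφa : φ a = 2) (hφb : φ b = 0) (hhb : h b = 2) :
    (((LinearMap.id - φ.smulRight a : Module.End K V)) *
      (-LinearMap.id + h.smulRight b : Module.End K V)) ^ 2 = 1 + φ.smulRight (h a • b) := by
  ext x
  simp [pow_two, hφa, hφb, hhb]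
  module

theorem reflection_mul_transvection {V : Type*} [AddCommGroup V] [Module K V] (φ g : V →ₗ[K] K)
    (a b : V) (t : K) (hφb : φ b = 0) (hg : g = -t • φ) :
    (LinearMap.id - φ.smulRight a : Module.End K V) * (LinearMap.id + g.smulRight b) =
      LinearMap.id - φ.smulRight (a + t • b) := by
  ext x
  simp [hφb, hg]
  module

theorem semiconjBy_transvection_reflection {V : Type*} [AddCommGroup V] [Module K V]
    (φ f : V →ₗ[K] K) (a b : V) (hφb : φ b = 0) (hfb : f b = 0) :
    SemiconjBy (LinearMap.id + f.smulRight b : Module.End K V)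
      (LinearMap.id - φ.smulRight a) (LinearMap.id - φ.smulRight (a + f a • b)) := by
  ext x
  simp [hφb, hfb]
  module

theorem lf_s1_bvec {α β l m : K} (hΔ : 8 - 2*α - 2*β - 2*(l*m) - (α*l + β*m) = 0) :
    lf ![2, -α, -β] (bvec l m) = 0 := by
  simp [lf_apply, bvec]
  linear_combination hΔ

theorem lf_s2_bvec (l m : K) : lf ![-1, 2, -l] (bvec l m) = 0 := by
  simp [lf_apply, bvec]
  ring

theorem lf_s3_bvec (l m : K) : lf ![-1, -m, 2] (bvec l m) = 0 := by
  simp [lf_apply, bvec]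
  ring

theorem lf_tau_bvec {l m : K} (hγ : 4 - l * m ≠ 0) (lam mu : K) :
    lf ![-(lam*(l+2) + mu*(m+2))/(4 - l*m), lam, mu] (bvec l m) = 0 := by
  simp only [lf_apply, bvec, Matrix.cons_val, div_mul_cancel₀ _ hγ]
  ring

theorem lf_tau_neg (l m lam mu : K) (x : Fin 3 → K) :
    lf ![-(-lam*(l+2) + -mu*(m+2))/(4 - l*m), -lam, -mu] x =
      -lf ![-(lam*(l+2) + mu*(m+2))/(4 - l*m), lam, mu] x := by
  simp only [lf_apply, Matrix.cons_val]
  ring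

theorem tau_mul_tau_neg {l m : K} (hγ : 4 - l * m ≠ 0) (lam mu : K) :
    tau l m lam mu * tau l m (-lam) (-mu) = 1 := by
  refine LinearMap.ext fun x => ?_
  simp only [tau, Module.End.mul_apply, LinearMap.add_apply, LinearMap.id_apply,
    LinearMap.smulRight_apply, map_add, map_smul, lf_tau_bvec hγ, lf_tau_neg, Module.End.one_apply]
  module

theorem s1_mul_tauv {α β l m : K} (hΔ : 8 - 2*α - 2*β - 2*(l*m) - (α*l + β*m) = 0)
    (hγ : 4 - l * m ≠ 0) (t : K) :
    s1 α β * tauv l m (t • c1 α β) =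
      LinearMap.id - (lf ![2, -α, -β]).smulRight (Pi.single 0 1 + t • bvec l m) := by
  refine reflection_mul_transvection _ _ _ _ t (lf_s1_bvec hΔ) (LinearMap.ext fun x => ?_)
  have hω : -(t*α*(l+2) + t*β*(m+2))/(4 - l*m) = -2 * t := by
    rw [div_eq_iff hγ]
    linear_combination t * hΔ
  simp only [c1, Prod.smul_mk, smul_eq_mul, LinearMap.smul_apply, lf_apply, Matrix.cons_val, hω]
  ring

theorem s2_mul_tauv {l m : K} (hγ : 4 - l * m ≠ 0) (t : K) :
    s2 l * tauv l m (t • c2 l) =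
      LinearMap.id - (lf ![-1, 2, -l]).smulRight (Pi.single 1 1 + t • bvec l m) := by
  refine reflection_mul_transvection _ _ _ _ t (lf_s2_bvec l m) (LinearMap.ext fun x => ?_)
  have hω : -(t*(-2)*(l+2) + t*l*(m+2))/(4 - l*m) = t := by
    rw [div_eq_iff hγ]
    ring
  simp only [c2, Prod.smul_mk, smul_eq_mul, LinearMap.smul_apply, lf_apply, Matrix.cons_val, hω]
  ring

theorem s3_mul_tauv {l m : K} (hγ : 4 - l * m ≠ 0) (t : K) :
    s3 m * tauv l m (t • c3 m) =
      LinearMap.id - (lf ![-1, -m, 2]).smulRight (Pi.single 2 1 + t • bvec l m) := by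
  refine reflection_mul_transvection _ _ _ _ t (lf_s3_bvec l m) (LinearMap.ext fun x => ?_)
  have hω : -(t*m*(l+2) + t*(-2)*(m+2))/(4 - l*m) = t := by
    rw [div_eq_iff hγ]
    ring
  simp only [c3, Prod.smul_mk, smul_eq_mul, LinearMap.smul_apply, lf_apply, Matrix.cons_val, hω]
  ring

theorem semiconjBy_tau_s2 {l m : K} (hγ : 4 - l * m ≠ 0) (lam mu : K) :
    SemiconjBy (tau l m lam mu) (s2 l) (s2 l * tauv l m (lam • c2 l)) := by
  rw [s2_mul_tauv hγ]
  have h := semiconjBy_transvection_reflection (lf ![-1, 2, -l]) _ (Pi.single 1 1) _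
    (lf_s2_bvec l m) (lf_tau_bvec hγ lam mu)
  have hf : lf ![-(lam*(l+2) + mu*(m+2))/(4 - l*m), lam, mu] (Pi.single 1 1) = lam := by
    simp [lf_apply]
  rwa [hf] at h

theorem semiconjBy_tau_s3 {l m : K} (hγ : 4 - l * m ≠ 0) (lam mu : K) :
    SemiconjBy (tau l m lam mu) (s3 m) (s3 m * tauv l m (mu • c3 m)) := by
  rw [s3_mul_tauv hγ]
  have h := semiconjBy_transvection_reflection (lf ![-1, -m, 2]) _ (Pi.single 2 1) _
    (lf_s3_bvec l m) (lf_tau_bvec hγ lam mu)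
  have hf : lf ![-(lam*(l+2) + mu*(m+2))/(4 - l*m), lam, mu] (Pi.single 2 1) = mu := by
    simp [lf_apply]
  rwa [hf] at h

theorem tau_mul_z1_mul_tau_neg {l m : K} (hγ : 4 - l * m ≠ 0) (lam mu : K) :
    tau l m lam mu * z1 l m * tau l m (-lam) (-mu) =
      -LinearMap.id + (lf ![2/(4 - l*m) + 2*(lam*(l+2) + mu*(m+2))/(4 - l*m),
        -2*lam, -2*mu]).smulRight (bvec l m) := by
  refine LinearMap.ext fun x => ?_
  have hz : lf ![2/(4 - l*m), 0, 0] (bvec l m) = 2 := by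
    simp [lf_apply, bvec, hγ]
  have hsum : lf ![2/(4 - l*m) + 2*(lam*(l+2) + mu*(m+2))/(4 - l*m), -2*lam, -2*mu] x =
      lf ![2/(4 - l*m), 0, 0] x -
        2 * lf ![-(lam*(l+2) + mu*(m+2))/(4 - l*m), lam, mu] x := by
    simp only [lf_apply, Matrix.cons_val]
    ring
  simp only [z1, tau, Module.End.mul_apply, LinearMap.add_apply, LinearMap.neg_apply,
    LinearMap.id_apply, LinearMap.smulRight_apply, map_add, map_neg, map_smul, lf_tau_bvec hγ,
    lf_tau_neg, hz, hsum]
  module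

/-- Theorem 2: assume `Δ = 0`, `γ ≠ 4`, `(α,β) ≠ (0,0)`, and let
`n ≥ 1` with `(s₂s₃)ⁿ = z₁`.  With `s₁' = s₁ ∘ τ(λ₁c₁)`, `s₂' = s₂ ∘ τ(λ₂c₂)`,
`s₃' = s₃ ∘ τ(λ₃c₃)`, one has `(s₁'(s₂'s₃')ⁿ)² = 1` iff
`(4−γ)λ₁ + (l+2)λ₂ + (m+2)λ₃ = −1`. -/
theorem stmt13 (α β l m : K)
    (hΔ : 8 - 2*α - 2*β - 2*(l*m) - (α*l + β*m) = 0) (hγ : l*m ≠ 4)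
    (hab : ¬(α = 0 ∧ β = 0)) (n : ℕ) (hn : 1 ≤ n)
    (hz : (s2 l * s3 m)^n = z1 l m) (lam1 lam2 lam3 : K) :
    ((s1 α β * tauv l m (lam1 • c1 α β)) *
        ((s2 l * tauv l m (lam2 • c2 l)) * (s3 m * tauv l m (lam3 • c3 m)))^n)^2 = 1 ↔
      (4 - l*m)*lam1 + (l+2)*lam2 + (m+2)*lam3 = -1 := by
  have hγ' : 4 - l * m ≠ 0 := sub_ne_zero.mpr hγ.symm
  have hconj := ((semiconjBy_tau_s2 hγ' lam2 lam3).mul_right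
    (semiconjBy_tau_s3 hγ' lam2 lam3)).pow_right n
  rw [hz] at hconj
  have hpow : ((s2 l * tauv l m (lam2 • c2 l)) * (s3 m * tauv l m (lam3 • c3 m)))^n =
      tau l m lam2 lam3 * z1 l m * tau l m (-lam2) (-lam3) := by
    rw [hconj.eq, mul_assoc _ (tau l m lam2 lam3), tau_mul_tau_neg hγ', mul_one]
  have hφb := lf_s1_bvec hΔ
  have hhb : lf ![2/(4 - l*m) + 2*(lam2*(l+2) + lam3*(m+2))/(4 - l*m), -2*lam2, -2*lam3]
      (bvec l m) = 2 := by
    simp only [lf_apply, bvec, Matrix.cons_val, add_mul, div_mul_cancel₀ _ hγ']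
    ring
  rw [hpow, tau_mul_z1_mul_tau_neg hγ', s1_mul_tauv hΔ hγ', reflection_mul_neg_add_sq _ _ _ _
    (by rw [map_add, map_smul, hφb]; simp [lf_apply]) hφb hhb, add_eq_left]
  have hval : lf ![2/(4 - l*m) + 2*(lam2*(l+2) + lam3*(m+2))/(4 - l*m), -2*lam2, -2*lam3]
      (Pi.single 0 1 + lam1 • bvec l m) =
      2 / (4 - l*m) * ((4 - l*m)*lam1 + (l+2)*lam2 + (m+2)*lam3 + 1) := by
    rw [map_add, map_smul, hhb]
    simp [lf_apply]
    field_simp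
    ring
  rw [hval, ← add_eq_zero_iff_eq_neg]
  constructor
  · intro h
    have h0 := congrFun (LinearMap.congr_fun h (Pi.single 0 1)) 0
    simpa [lf_apply, bvec, hγ'] using h0
  · intro h
    simp [h]

end
end
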